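/- Let Γ₁, Γ₂ : ℝ → ℂ be smooth curves parametrized by arclength, each satisfying the Abresch–Langer self-shrinker equation Γᵢ''(t) = ⟨Γᵢ'(t), i·Γᵢ(t)⟩ · i·Γᵢ'(t), and set ρᵢ = ⟨Γᵢ'(0), i·Γᵢ(0)⟩ · e^{−|Γᵢ(0)|²/2} for i = 1, 2. Then the squared norm of the mean curvature vector of the product immersion φ(t₁,t₂) = (Γ₁(t₁), Γ₂(t₂)) satisfies, for all (t₁,t₂): ‖(Γ₁''(t₁), Γ₂''(t₂))‖² = ⟨Γ₁'(t₁), i·Γ₁(t₁)⟩² + ⟨Γ₂'(t₂), i·Γ₂(t₂)⟩² = ρ₁²·e^{|Γ₁(t₁)|²} + ρ₂²·e^{|Γ₂(t₂)|²}. -/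

import Mathlib

/-- Real inner product on ℂ ≅ ℝ²: ⟨u,v⟩ = Re(u · conj v). -/
noncomputable def rinner (u v : ℂ) : ℝ := u.re * v.re + u.im * v.im

/-!
Along an Abresch–Langer curve the function `κ = ⟨γ', iγ⟩` satisfies
`κ' = ⟨γ'', iγ⟩ = κ⟨iγ', iγ⟩ = κ⟨γ', γ⟩`, since `⟨γ', iγ'⟩ = 0`. As `⟨γ', γ⟩` is the derivative of
`|γ|² / 2`, the quantity `κ exp (-|γ|² / 2)` is constant. For unit speed, `|γ''| = |κ|`.
-/

lemma hasDerivAt_norm_sq_div_two {E : Type*} [NormedAddCommGroup E] [InnerProductSpace ℝ E]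
    {γ : ℝ → E} {v : E} {t : ℝ} (h : HasDerivAt γ v t) :
    HasDerivAt (fun s ↦ ‖γ s‖ ^ 2 / 2) (inner ℝ (γ t) v) t := by
  simpa using h.norm_sq.div_const 2

lemma mul_exp_neg_eq_of_hasDerivAt {k g g' : ℝ → ℝ}
    (hk : ∀ t, HasDerivAt k (k t * g' t) t) (hg : ∀ t, HasDerivAt g (g' t) t) (s t : ℝ) :
    k s * Real.exp (-g s) = k t * Real.exp (-g t) := by
  have hderiv (x : ℝ) : HasDerivAt (fun x ↦ k x * Real.exp (-g x)) 0 x :=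
    ((hk x).mul (hg x).neg.exp).congr_deriv (by simp only [Pi.neg_apply]; ring)
  exact is_const_of_deriv_eq_zero (fun x ↦ (hderiv x).differentiableAt)
    (fun x ↦ (hderiv x).deriv) s t

lemma rinner_eq_inner (u v : ℂ) : rinner u v = inner ℝ u v := by
  simp [rinner, Complex.inner, mul_comm]

lemma rinner_comm (u v : ℂ) : rinner u v = rinner v u := by
  simp only [rinner_eq_inner, real_inner_comm]

lemma rinner_smul_left (c : ℝ) (u v : ℂ) : rinner (c • u) v = c * rinner u v := by
  simp only [rinner_eq_inner, real_inner_smul_left]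

lemma rinner_self_I_mul (u : ℂ) : rinner u (Complex.I * u) = 0 := by
  simp [rinner, mul_comm]

lemma rinner_I_mul_I_mul (u v : ℂ) :
    rinner (Complex.I * u) (Complex.I * v) = rinner u v := by
  simp [rinner, add_comm]

lemma hasDerivAt_rinner {f g : ℝ → ℂ} {f' g' : ℂ} {t : ℝ}
    (hf : HasDerivAt f f' t) (hg : HasDerivAt g g' t) :
    HasDerivAt (fun s ↦ rinner (f s) (g s)) (rinner (f t) g' + rinner f' (g t)) t := by
  simpa only [rinner_eq_inner] using hf.inner ℝ hg

/-- The support function `⟨γ', iγ⟩ = ⟨γ, -iγ'⟩` of a plane curve, taken with respect to the normal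
`-iγ'`. On an Abresch–Langer curve of unit speed it is the signed curvature relative
to `iγ'`. -/
noncomputable def supportFunction (γ : ℝ → ℂ) (t : ℝ) : ℝ :=
  rinner (deriv γ t) (Complex.I * γ t)

/-- The Abresch–Langer self-shrinker equation `γ'' = ⟨γ', iγ⟩ iγ'`. Neither unit speed nor
differentiability is part of it, so `deriv` may take its junk value `0` on a curve that is not
twice differentiable. -/
def IsAbreschLanger (γ : ℝ → ℂ) : Prop :=
  ∀ t, deriv (deriv γ) t = supportFunction γ t • (Complex.I * deriv γ t)

lemma hasDerivAt_supportFunction {γ : ℝ → ℂ} {t : ℝ} (hγ : DifferentiableAt ℝ γ t)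
    (hγ' : DifferentiableAt ℝ (deriv γ) t) :
    HasDerivAt (supportFunction γ) (rinner (deriv (deriv γ) t) (Complex.I * γ t)) t :=
  (hasDerivAt_rinner hγ'.hasDerivAt (hγ.hasDerivAt.const_mul Complex.I)).congr_deriv
    (by rw [rinner_self_I_mul, zero_add])

namespace IsAbreschLanger

variable {γ : ℝ → ℂ}

lemma norm_deriv_deriv (h : IsAbreschLanger γ) (t : ℝ) :
    ‖deriv (deriv γ) t‖ = |supportFunction γ t| * ‖deriv γ t‖ := by
  rw [h t, norm_smul, norm_mul, Complex.norm_I, one_mul, Real.norm_eq_abs]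

lemma norm_deriv_deriv_sq (h : IsAbreschLanger γ) {t : ℝ} (hunit : ‖deriv γ t‖ = 1) :
    ‖deriv (deriv γ) t‖ ^ 2 = supportFunction γ t ^ 2 := by
  rw [h.norm_deriv_deriv, hunit, mul_one, sq_abs]

protected lemma hasDerivAt_supportFunction (h : IsAbreschLanger γ) {t : ℝ}
    (hγ : DifferentiableAt ℝ γ t) (hγ' : DifferentiableAt ℝ (deriv γ) t) :
    HasDerivAt (supportFunction γ) (supportFunction γ t * inner ℝ (γ t) (deriv γ t)) t := by
  refine (hasDerivAt_supportFunction hγ hγ').congr_deriv ?_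
  rw [h t, rinner_smul_left, rinner_I_mul_I_mul, rinner_comm, rinner_eq_inner]

lemma supportFunction_mul_exp_eq (h : IsAbreschLanger γ) (hγ : ContDiff ℝ 2 γ) (s t : ℝ) :
    supportFunction γ s * Real.exp (-‖γ s‖ ^ 2 / 2) =
      supportFunction γ t * Real.exp (-‖γ t‖ ^ 2 / 2) := by
  have hd : Differentiable ℝ γ := hγ.differentiable two_ne_zero
  simpa only [neg_div] using mul_exp_neg_eq_of_hasDerivAt
    (fun x ↦ h.hasDerivAt_supportFunction (hd x) (hγ.differentiable_deriv_two x))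
    (fun x ↦ hasDerivAt_norm_sq_div_two (hd x).hasDerivAt) s t

lemma supportFunction_sq (h : IsAbreschLanger γ) (hγ : ContDiff ℝ 2 γ) (s t : ℝ) :
    supportFunction γ t ^ 2 =
      (supportFunction γ s * Real.exp (-‖γ s‖ ^ 2 / 2)) ^ 2 * Real.exp (‖γ t‖ ^ 2) := by
  have hexp : Real.exp (-‖γ t‖ ^ 2 / 2) ^ 2 * Real.exp (‖γ t‖ ^ 2) = 1 := by
    rw [← Real.exp_nat_mul, ← Real.exp_add, Real.exp_eq_one_iff]
    push_cast
    ring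
  rw [h.supportFunction_mul_exp_eq hγ s t, mul_pow, mul_assoc, hexp, mul_one]

end IsAbreschLanger

/-- The squared norm of the mean curvature vector H = (Γ₁''(t₁), Γ₂''(t₂)) of the
product of two Abresch–Langer curves equals ⟨Γ₁', iΓ₁⟩² + ⟨Γ₂', iΓ₂⟩²
= ρ₁² e^{|Γ₁|²} + ρ₂² e^{|Γ₂|²}. -/
theorem abresch_langer_product_mean_curvature (Γ₁ Γ₂ : ℝ → ℂ)
    (hs₁ : ContDiff ℝ (⊤ : ℕ∞) Γ₁) (hs₂ : ContDiff ℝ (⊤ : ℕ∞) Γ₂)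
    (harc₁ : ∀ t, ‖deriv Γ₁ t‖ = 1) (harc₂ : ∀ t, ‖deriv Γ₂ t‖ = 1)
    (hAL₁ : ∀ t, deriv (deriv Γ₁) t =
      (rinner (deriv Γ₁ t) (Complex.I * Γ₁ t)) • (Complex.I * deriv Γ₁ t))
    (hAL₂ : ∀ t, deriv (deriv Γ₂) t =
      (rinner (deriv Γ₂ t) (Complex.I * Γ₂ t)) • (Complex.I * deriv Γ₂ t)) :
    ∀ t₁ t₂ : ℝ,
      ‖deriv (deriv Γ₁) t₁‖ ^ 2 + ‖deriv (deriv Γ₂) t₂‖ ^ 2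
        = rinner (deriv Γ₁ t₁) (Complex.I * Γ₁ t₁) ^ 2
          + rinner (deriv Γ₂ t₂) (Complex.I * Γ₂ t₂) ^ 2 ∧
      ‖deriv (deriv Γ₁) t₁‖ ^ 2 + ‖deriv (deriv Γ₂) t₂‖ ^ 2
        = (rinner (deriv Γ₁ 0) (Complex.I * Γ₁ 0) * Real.exp (-‖Γ₁ 0‖ ^ 2 / 2)) ^ 2
            * Real.exp (‖Γ₁ t₁‖ ^ 2)
          + (rinner (deriv Γ₂ 0) (Complex.I * Γ₂ 0) * Real.exp (-‖Γ₂ 0‖ ^ 2 / 2)) ^ 2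
            * Real.exp (‖Γ₂ t₂‖ ^ 2) := by
  intro t₁ t₂
  have hγ₁ : IsAbreschLanger Γ₁ := hAL₁
  have hγ₂ : IsAbreschLanger Γ₂ := hAL₂
  have hcurvature : ‖deriv (deriv Γ₁) t₁‖ ^ 2 + ‖deriv (deriv Γ₂) t₂‖ ^ 2
      = supportFunction Γ₁ t₁ ^ 2 + supportFunction Γ₂ t₂ ^ 2 := by
    rw [hγ₁.norm_deriv_deriv_sq (harc₁ t₁), hγ₂.norm_deriv_deriv_sq (harc₂ t₂)]
  have hC₁ : ContDiff ℝ 2 Γ₁ := contDiff_infty.1 hs₁ 2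
  have hC₂ : ContDiff ℝ 2 Γ₂ := contDiff_infty.1 hs₂ 2
  exact ⟨hcurvature, hcurvature.trans <|
    congrArg₂ (· + ·) (hγ₁.supportFunction_sq hC₁ 0 t₁) (hγ₂.supportFunction_sq hC₂ 0 t₂)⟩
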